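/- arXiv:2105.00869 — 3 statements merged into one kernel-verified Lean document; each statement's English description precedes it below -/
import Mathlib

section
/- For every real x > 0, the derivative with respect to s of the function s ↦ ∫₀^∞ cos(x·u)/(u² + 1)^{s + 1/2} du, evaluated at s = 1/2, equals ( ∫₀^∞ e^{−u}/(u + 2x) du + log x + γ − log 2 ) · (π/2)·e^{−x}, where γ is the Euler–Mascheroni constant (so that Γ'(1) = −γ). -/
/-!
Differentiation under the integral sign gives `-∫₀^∞ cos (x u) log (u² + 1) / (u² + 1) du`.
Write `log (u² + 1) = ∫₀^∞ 2 u² / ((v + 1) (u² + (v + 1)²)) dv` and exchange the integrals. After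
partial fractions, the inner integrals are Fourier transforms of Cauchy densities, known from
Fourier inversion of `exp (-b |t|)`, and what remains is
`π exp (-x) ∫₀^∞ (exp (-x v) - 1 / (v + 1)) / (v (v + 2)) dv`. In
`1 / (v (v + 2)) = (1 / v - 1 / (v + 2)) / 2` the first term contributes `-(γ + log x)`, which comes
from `Γ'(1) = -γ` after integration by parts, and the second contributes the exponential integral
and `log 2`.
-/

open MeasureTheory Set Filter Topology Real
open scoped FourierTransform

theorem log_div_rpow_le_inv {w ε r : ℝ} (hw : 1 ≤ w) (hε : 0 < ε) (hεr : ε ≤ r) :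
    log w / w ^ r ≤ ε⁻¹ := by
  have hw₀ : 0 < w := one_pos.trans_le hw
  rw [div_le_iff₀ (rpow_pos_of_pos hw₀ r)]
  calc log w ≤ w ^ ε / ε := log_le_rpow_div hw₀.le hε
    _ ≤ w ^ r / ε := by gcongr
    _ = ε⁻¹ * w ^ r := div_eq_inv_mul _ _

theorem hasDerivAt_const_div_rpow (c : ℝ) {w : ℝ} (hw : 0 < w) (s : ℝ) :
    HasDerivAt (fun s => c / w ^ s) (-(c / w ^ s * log w)) s := by
  have hpow : w ^ s ≠ 0 := (rpow_pos_of_pos hw s).ne'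
  refine ((hasDerivAt_const s c).fun_div ((hasDerivAt_id s).const_rpow hw) hpow).congr_deriv ?_
  simp only [id_eq]
  field_simp
  ring

section ParametricIntegral

variable {α : Type*} [MeasurableSpace α] {μ : Measure α}

theorem hasDerivAt_integral_div_rpow {f w : α → ℝ} {p q : ℝ} (hw : AEMeasurable w μ)
    (hw₁ : ∀ a, 1 ≤ w a) (hf : Integrable (fun a => f a / w a ^ q) μ) (hqp : q < p) :
    Integrable (fun a => f a / w a ^ p * log (w a)) μ ∧
      HasDerivAt (fun s => ∫ a, f a / w a ^ s ∂μ) (-∫ a, f a / w a ^ p * log (w a) ∂μ) p := by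
  have hw₀ (a : α) : 0 < w a := one_pos.trans_le (hw₁ a)
  have hsplit (s : ℝ) (a : α) : f a / w a ^ s = f a / w a ^ q * (w a ^ (s - q))⁻¹ := by
    rw [rpow_sub (hw₀ a), inv_div]
    field_simp [(rpow_pos_of_pos (hw₀ a) q).ne']
  have hmeas (s : ℝ) : AEStronglyMeasurable (fun a => f a / w a ^ s) μ := by
    simp only [hsplit s]
    exact hf.aestronglyMeasurable.mul (hw.pow_const _).inv.aestronglyMeasurable
  have hint : Integrable (fun a => f a / w a ^ p) μ := by
    refine hf.mono (hmeas p) (ae_of_all _ fun a => ?_)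
    simp only [norm_div, norm_rpow_of_nonneg (hw₀ a).le, norm_of_nonneg (hw₀ a).le]
    have := rpow_pos_of_pos (hw₀ a) q
    gcongr
    exact hw₁ a
  have hmeas' : AEStronglyMeasurable (fun a => -(f a / w a ^ p * log (w a))) μ :=
    ((hmeas p).mul hw.log.aestronglyMeasurable).neg
  have hbound : ∀ a, ∀ s ∈ Ioi ((p + q) / 2), ‖-(f a / w a ^ s * log (w a))‖
      ≤ ‖f a / w a ^ q‖ * ((p - q) / 2)⁻¹ := fun a s (hs : _ < s) => by
    have hlog := log_nonneg (hw₁ a)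
    have := rpow_pos_of_pos (hw₀ a) (s - q)
    rw [hsplit s, mul_assoc, norm_neg, norm_mul, inv_mul_eq_div,
      norm_of_nonneg (by positivity : 0 ≤ log (w a) / w a ^ (s - q))]
    gcongr
    exact log_div_rpow_le_inv (hw₁ a) (by linarith) (by linarith)
  have h := hasDerivAt_integral_of_dominated_loc_of_deriv_le
    (Ioi_mem_nhds (show (p + q) / 2 < p by linarith)) (Eventually.of_forall hmeas) hint hmeas'
    (ae_of_all _ hbound) (hf.norm.mul_const _)
    (ae_of_all _ fun a s _ => hasDerivAt_const_div_rpow (f a) (hw₀ a) s)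
  exact ⟨integrable_neg_iff.1 h.1, by simpa only [integral_neg] using h.2⟩

theorem integral_mul_integral_swap {β : Type*} [MeasurableSpace β] {ν : Measure β} [SFinite μ]
    [SFinite ν] {g : α → ℝ} {k : α → β → ℝ} (hg : AEStronglyMeasurable g μ)
    (hk : AEStronglyMeasurable (Function.uncurry k) (μ.prod ν)) (hk₀ : ∀ a, 0 ≤ᵐ[ν] k a)
    (hki : ∀ a, Integrable (k a) ν) (hgk : Integrable (fun a => g a * ∫ b, k a b ∂ν) μ) :
    ∫ a, g a * ∫ b, k a b ∂ν ∂μ = ∫ b, ∫ a, g a * k a b ∂μ ∂ν := by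
  have hnorm (a : α) : ∫ b, ‖g a * k a b‖ ∂ν = ‖g a * ∫ b, k a b ∂ν‖ := by
    simp only [norm_mul, norm_of_nonneg (integral_nonneg_of_ae (hk₀ a))]
    rw [integral_const_mul, integral_congr_ae ((hk₀ a).mono fun b hb => norm_of_nonneg hb)]
  have hprod : Integrable (Function.uncurry fun a b => g a * k a b) (μ.prod ν) := by
    have hmeas : AEStronglyMeasurable (Function.uncurry fun a b => g a * k a b) (μ.prod ν) :=
      hg.comp_fst.mul hk
    refine (integrable_prod_iff hmeas).2 ⟨ae_of_all _ fun a => (hki a).const_mul (g a), ?_⟩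
    simpa only [Function.uncurry_apply_pair, hnorm] using hgk.norm
  simp only [← integral_const_mul]
  exact integral_integral_swap hprod

end ParametricIntegral

theorem integrable_inv_sq_add_sq {b : ℝ} (hb : b ≠ 0) :
    Integrable fun u : ℝ => (u ^ 2 + b ^ 2)⁻¹ := by
  refine ((integrable_inv_one_add_sq.comp_mul_left' (inv_ne_zero hb)).const_mul (b ^ 2)⁻¹).congr
    (ae_of_all _ fun u => ?_)
  simp only
  rw [← mul_inv]
  congr 1
  field_simp
  ring

theorem integrable_cos_mul_div_sq_add_sq (x : ℝ) {b : ℝ} (hb : b ≠ 0) :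
    Integrable fun u : ℝ => cos (x * u) / (u ^ 2 + b ^ 2) :=
  (integrable_inv_sq_add_sq hb).bdd_mul (by fun_prop) (ae_of_all _ fun u => abs_cos_le_one (x * u))

theorem integrable_exp_neg_mul_abs {b : ℝ} (hb : 0 < b) :
    Integrable fun t : ℝ => exp (-(b * |t|)) := by
  rw [← integrableOn_univ, ← Iic_union_Ioi (a := (0 : ℝ))]
  refine .union
    ((integrableOn_exp_mul_Iic hb 0).congr_fun (fun t (ht : t ≤ 0) => ?_) measurableSet_Iic)
    ((integrableOn_exp_mul_Ioi (neg_lt_zero.2 hb) 0).congr_fun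
      (fun t (ht : 0 < t) => ?_) measurableSet_Ioi)
  · simp only [abs_of_nonpos ht, mul_neg, neg_neg]
  · simp only [abs_of_pos ht, neg_mul]

theorem integral_cexp_mul_exp_neg_mul_abs {b : ℝ} (hb : 0 < b) (y : ℝ) :
    ∫ t : ℝ, Complex.exp (-(y * t) * Complex.I) * (exp (-(b * |t|)) : ℂ)
      = 2 * b / (y ^ 2 + b ^ 2) := by
  have hint : Integrable fun t : ℝ =>
      Complex.exp (-(y * t) * Complex.I) * (exp (-(b * |t|)) : ℂ) := by
    refine (integrable_exp_neg_mul_abs hb).ofReal.bdd_mul (c := 1) (by fun_prop)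
      (ae_of_all _ fun t => ?_)
    exact_mod_cast (Complex.norm_exp_ofReal_mul_I (-(y * t))).le
  have hneg : ∀ t ∈ Iic (0 : ℝ), Complex.exp (-(y * t) * Complex.I) * (exp (-(b * |t|)) : ℂ)
      = Complex.exp ((b - y * Complex.I) * t) := by
    intro t (ht : t ≤ 0)
    rw [abs_of_nonpos ht, Complex.ofReal_exp, ← Complex.exp_add]
    congr 1
    push_cast
    ring
  have hpos : ∀ t ∈ Ioi (0 : ℝ), Complex.exp (-(y * t) * Complex.I) * (exp (-(b * |t|)) : ℂ)
      = Complex.exp ((-b - y * Complex.I) * t) := by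
    intro t (ht : 0 < t)
    rw [abs_of_pos ht, Complex.ofReal_exp, ← Complex.exp_add]
    congr 1
    push_cast
    ring
  have h₁ : (b - y * Complex.I : ℂ) ≠ 0 := fun h => hb.ne' (by simpa using congrArg Complex.re h)
  have h₂ : (-b - y * Complex.I : ℂ) ≠ 0 := fun h => hb.ne' (by simpa using congrArg Complex.re h)
  have h₃ : (y ^ 2 + b ^ 2 : ℂ) ≠ 0 := by exact_mod_cast (by positivity : y ^ 2 + b ^ 2 ≠ 0)
  rw [← intervalIntegral.integral_Iic_add_Ioi (b := 0) hint.integrableOn hint.integrableOn,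
    setIntegral_congr_fun measurableSet_Iic hneg, setIntegral_congr_fun measurableSet_Ioi hpos,
    integral_exp_mul_complex_Iic (by simpa), integral_exp_mul_complex_Ioi (by simpa)]
  simp only [Complex.ofReal_zero, mul_zero, Complex.exp_zero]
  rw [div_add_div _ _ h₁ h₂, div_eq_div_iff (mul_ne_zero h₁ h₂) h₃]
  linear_combination (-2 * b * (y : ℂ) ^ 2) * Complex.I_sq

theorem fourier_exp_neg_mul_abs {b : ℝ} (hb : 0 < b) :
    𝓕 (fun t : ℝ => (exp (-(b * |t|)) : ℂ))
      = fun w : ℝ => ((2 * b / ((2 * π * w) ^ 2 + b ^ 2) : ℝ) : ℂ) := by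
  ext w
  rw [fourier_real_eq_integral_exp_smul]
  have h := integral_cexp_mul_exp_neg_mul_abs hb (2 * π * w)
  push_cast at h ⊢
  rw [← h]
  congr! 3 with t
  ring_nf

theorem integral_cos_mul_div_sq_add_sq (x : ℝ) {b : ℝ} (hb : 0 < b) :
    ∫ u : ℝ, cos (x * u) / (u ^ 2 + b ^ 2) = π / b * exp (-(b * |x|)) := by
  set F : ℝ → ℝ := fun w => 2 * b / ((2 * π * w) ^ 2 + b ^ 2)
  have hF : Integrable fun w => (F w : ℂ) :=
    (((integrable_inv_sq_add_sq hb.ne').comp_mul_left' two_pi_pos.ne').const_mul (2 * b)).ofReal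
  have hchar : Integrable fun w : ℝ => Complex.exp (↑(2 * π * (w * x)) * Complex.I) * (F w : ℂ) :=
    hF.bdd_mul (by fun_prop) (ae_of_all _ fun w => (Complex.norm_exp_ofReal_mul_I _).le)
  have hcont : Continuous fun t : ℝ => (exp (-(b * |t|)) : ℂ) := by fun_prop
  have hinv : ∫ w : ℝ, Complex.exp (↑(2 * π * (w * x)) * Complex.I) * (F w : ℂ)
      = (exp (-(b * |x|)) : ℂ) := by
    have h := congrFun (hcont.fourierInv_fourier_eq (integrable_exp_neg_mul_abs hb).ofReal
      (by rwa [fourier_exp_neg_mul_abs hb])) x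
    rw [fourier_exp_neg_mul_abs hb, fourierInv_eq'] at h
    simpa only [F, inner_apply, conj_trivial, smul_eq_mul, mul_comm x] using h
  have hre : ∫ w : ℝ, cos (x * (2 * π * w)) * F w = exp (-(b * |x|)) := by
    rw [← Complex.ofReal_re (exp _), ← hinv, ← RCLike.re_to_complex, ← integral_re hchar]
    congr! 2 with w
    rw [RCLike.re_to_complex, Complex.re_mul_ofReal, Complex.exp_ofReal_mul_I_re]
    congr 2
    ring
  have hscale := Measure.integral_comp_mul_left
    (fun u : ℝ => cos (x * u) * (2 * b / (u ^ 2 + b ^ 2))) (2 * π)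
  rw [hre, abs_of_pos (inv_pos.2 two_pi_pos), smul_eq_mul] at hscale
  rw [hscale, ← integral_const_mul, ← integral_const_mul]
  congr! 2
  field_simp

theorem integral_Ioi_cos_mul_div_sq_add_sq (x : ℝ) {b : ℝ} (hb : 0 < b) :
    ∫ u in Ioi (0 : ℝ), cos (x * u) / (u ^ 2 + b ^ 2) = π / (2 * b) * exp (-(b * |x|)) := by
  have heven : ∫ u : ℝ, cos (x * u) / (u ^ 2 + b ^ 2)
      = 2 * ∫ u in Ioi (0 : ℝ), cos (x * u) / (u ^ 2 + b ^ 2) := by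
    rw [← integral_comp_abs (f := fun u => cos (x * u) / (u ^ 2 + b ^ 2))]
    congr! 2 with u
    rw [← cos_abs (x * u), ← cos_abs (x * |u|), abs_mul, abs_mul, abs_abs, sq_abs]
  rw [integral_cos_mul_div_sq_add_sq x hb] at heven
  field_simp at heven ⊢
  linarith

theorem abs_log_le_rpow_add_rpow {ε t : ℝ} (hε : 0 < ε) (ht : 0 < t) :
    |log t| ≤ (t ^ ε + t ^ (-ε)) / ε := by
  have h₁ := log_le_rpow_div ht.le hε
  have h₂ := log_le_rpow_div (inv_nonneg.2 ht.le) hε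
  have := rpow_pos_of_pos ht ε
  rw [log_inv, inv_rpow ht.le, ← rpow_neg ht.le] at h₂
  have := rpow_pos_of_pos ht (-ε)
  rw [abs_le, add_div]
  constructor <;> linarith [div_pos ‹0 < t ^ ε› hε, div_pos ‹0 < t ^ (-ε)› hε]

theorem integrableOn_Ioi_exp_neg_mul_mul_log {b : ℝ} (hb : 0 < b) :
    IntegrableOn (fun t : ℝ => exp (-(b * t)) * log t) (Ioi 0) := by
  have hpow {s : ℝ} (hs : -1 < s) :
      IntegrableOn (fun t : ℝ => t ^ s * exp (-(b * t))) (Ioi 0) := by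
    simpa only [rpow_one, neg_mul] using integrableOn_rpow_mul_exp_neg_mul_rpow hs one_pos hb
  have hbound :=
    ((hpow (s := 1 / 2) (by norm_num)).add (hpow (s := -(1 / 2)) (by norm_num))).const_mul 2
  refine hbound.mono' (by fun_prop) (ae_restrict_of_forall_mem measurableSet_Ioi ?_)
  intro t (ht : 0 < t)
  rw [norm_mul, norm_of_nonneg (exp_pos _).le]
  calc exp (-(b * t)) * |log t|
      ≤ exp (-(b * t)) * ((t ^ (1 / 2 : ℝ) + t ^ (-(1 / 2) : ℝ)) / (1 / 2)) := by
        gcongr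
        exact abs_log_le_rpow_add_rpow one_half_pos ht
    _ = 2 * (t ^ (1 / 2 : ℝ) * exp (-(b * t)) + t ^ (-(1 / 2) : ℝ) * exp (-(b * t))) := by ring

theorem integral_Ioi_exp_neg_mul_log :
    ∫ t in Ioi (0 : ℝ), exp (-t) * log t = -eulerMascheroniConstant := by
  have hderiv : HasDerivAt Complex.Gamma
      (∫ t : ℝ in Ioi 0, (t : ℂ) ^ ((1 : ℂ) - 1) * (log t * exp (-t))) 1 := by
    refine (Complex.hasDerivAt_GammaIntegral (by simp)).congr_of_eventuallyEq ?_
    filter_upwards [(isOpen_Ioi.preimage Complex.continuous_re).mem_nhds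
      (show (1 : ℂ) ∈ Complex.re ⁻¹' Ioi 0 by simp)] with s hs
    exact Complex.Gamma_eq_integral hs
  have h := hderiv.unique Complex.hasDerivAt_Gamma_one
  simp only [sub_self, Complex.cpow_zero, one_mul, ← Complex.ofReal_mul, mul_comm (log _)] at h
  rw [integral_complex_ofReal] at h
  exact_mod_cast h

theorem integral_Ioi_exp_neg_mul_mul_log {b : ℝ} (hb : 0 < b) :
    ∫ t in Ioi (0 : ℝ), exp (-(b * t)) * log t = -(eulerMascheroniConstant + log b) / b := by
  have hlog : IntegrableOn (fun t : ℝ => exp (-t) * log t) (Ioi 0) := by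
    simpa only [one_mul] using integrableOn_Ioi_exp_neg_mul_mul_log one_pos
  have hexp : IntegrableOn (fun t : ℝ => exp (-t) * log b) (Ioi 0) :=
    (integrableOn_exp_neg_Ioi 0).mul_const _
  calc ∫ t in Ioi (0 : ℝ), exp (-(b * t)) * log t
      = ∫ t in Ioi (0 : ℝ), (exp (-(b * t)) * log (b * t) - exp (-(b * t)) * log b) := by
        refine setIntegral_congr_fun measurableSet_Ioi fun t (ht : 0 < t) => ?_
        simp only [log_mul hb.ne' ht.ne']
        ring
    _ = b⁻¹ * ∫ t in Ioi (0 : ℝ), (exp (-t) * log t - exp (-t) * log b) := by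
        simpa only [mul_zero, smul_eq_mul] using
          integral_comp_mul_left_Ioi (fun t => exp (-t) * log t - exp (-t) * log b) 0 hb
    _ = -(eulerMascheroniConstant + log b) / b := by
        rw [integral_sub hlog hexp, integral_mul_const, integral_Ioi_exp_neg_mul_log,
          integral_exp_neg_Ioi_zero]
        ring

theorem integrableOn_Ioi_exp_neg_mul_sub_inv_div {x : ℝ} (hx : 0 < x) :
    IntegrableOn (fun v : ℝ => (exp (-(x * v)) - (v + 1)⁻¹) / v) (Ioi 0) := by
  have hexp : IntegrableOn (fun v : ℝ => exp (-(x * v))) (Ioi 0) := by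
    simpa only [neg_mul] using exp_neg_integrableOn_Ioi 0 hx
  have hsq : IntegrableOn (fun v : ℝ => (v + 1) ^ (-2 : ℝ)) (Ioi 0) :=
    integrableOn_add_rpow_Ioi_of_lt (by norm_num) (by norm_num)
  have hmeas : Measurable fun v : ℝ => (exp (-(x * v)) - (v + 1)⁻¹) / v := by fun_prop
  refine (hexp.add (hsq.const_mul (x + 1))).mono' hmeas.aestronglyMeasurable
    (ae_restrict_of_forall_mem measurableSet_Ioi ?_)
  intro v (hv : 0 < v)
  have hle : exp (-(x * v)) ≤ 1 := exp_le_one_iff.2 (by nlinarith)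
  have hge : 1 - x * v ≤ exp (-(x * v)) := one_sub_le_exp_neg _
  have hquot : (1 - exp (-(x * v))) / v ≤ (x + 1) / (v + 1) := by
    rw [div_le_div_iff₀ hv (by positivity)]
    nlinarith [exp_pos (-(x * v))]
  have hquot₀ : 0 ≤ (1 - exp (-(x * v))) / v := div_nonneg (by linarith) hv.le
  have hsplit : (exp (-(x * v)) - (v + 1)⁻¹) / v
      = exp (-(x * v)) / (v + 1) - (1 - exp (-(x * v))) / v / (v + 1) := by
    field_simp
    ring
  rw [hsplit]
  refine (norm_sub_le _ _).trans (add_le_add ?_ ?_)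
  · rw [norm_of_nonneg (by positivity)]
    exact div_le_self (exp_pos _).le (by linarith)
  · beta_reduce
    rw [norm_of_nonneg (div_nonneg hquot₀ (by positivity)), rpow_neg (by positivity), rpow_two]
    calc (1 - exp (-(x * v))) / v / (v + 1) ≤ (x + 1) / (v + 1) / (v + 1) := by gcongr
      _ = (x + 1) * ((v + 1) ^ 2)⁻¹ := by field_simp

theorem continuousAt_exp_neg_mul_sub_one_mul_log (x : ℝ) :
    ContinuousAt (fun v : ℝ => (exp (-(x * v)) - 1) * log v) 0 := by
  have hO : (fun v : ℝ => exp (-(x * v)) - 1) =O[𝓝 0] fun v => v := by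
    have h : HasDerivAt (fun v : ℝ => exp (-(x * v))) _ 0 :=
      ((hasDerivAt_id (0 : ℝ)).const_mul x).neg.exp
    simpa using h.isBigO_sub
  have hmul : Tendsto (fun v : ℝ => v * log v) (𝓝 0) (𝓝 0) := by
    simpa using continuous_mul_log.tendsto 0
  have hlim := (hO.mul (Asymptotics.isBigO_refl log (𝓝 0))).trans_tendsto hmul
  simpa [ContinuousAt] using hlim

theorem tendsto_exp_neg_mul_mul_log_atTop {x : ℝ} (hx : 0 < x) :
    Tendsto (fun v : ℝ => exp (-(x * v)) * log v) atTop (𝓝 0) := by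
  have h := (Asymptotics.isBigO_refl (fun v : ℝ => exp (-(x * v))) atTop).mul
    isLittleO_log_id_atTop.isBigO
  refine h.trans_tendsto ((tendsto_rpow_mul_exp_neg_mul_atTop_nhds_zero 1 x hx).congr fun v => ?_)
  rw [rpow_one, neg_mul, mul_comm, id_eq]

theorem integral_Ioi_exp_neg_mul_sub_inv_div {x : ℝ} (hx : 0 < x) :
    ∫ v in Ioi (0 : ℝ), (exp (-(x * v)) - (v + 1)⁻¹) / v
      = -(eulerMascheroniConstant + log x) := by
  have hquot := integrableOn_Ioi_exp_neg_mul_sub_inv_div hx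
  have hlog := (integrableOn_Ioi_exp_neg_mul_mul_log hx).const_mul x
  set F : ℝ → ℝ := fun v => (exp (-(x * v)) - 1) * log v + log (v + 1) with hF
  have hcont : ContinuousAt F 0 :=
    (continuousAt_exp_neg_mul_sub_one_mul_log x).add
      (ContinuousAt.log (by fun_prop) (by norm_num))
  have hderiv : ∀ v ∈ Ioi (0 : ℝ), HasDerivAt F
      ((exp (-(x * v)) - (v + 1)⁻¹) / v - x * (exp (-(x * v)) * log v)) v := by
    intro v (hv : 0 < v)
    have hexp : HasDerivAt (fun v : ℝ => exp (-(x * v)) - 1) (exp (-(x * v)) * (-(x * 1))) v :=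
      ((hasDerivAt_id v).const_mul x).neg.exp.sub_const 1
    have hlog : HasDerivAt (fun v : ℝ => log (v + 1)) (1 / (v + 1)) v :=
      ((hasDerivAt_id v).add_const 1).log (by positivity)
    refine ((hexp.fun_mul (hasDerivAt_log hv.ne')).add hlog).congr_deriv ?_
    field_simp
    ring
  have hlim : Tendsto F atTop (𝓝 0) := by
    have h := (tendsto_exp_neg_mul_mul_log_atTop hx).add (tendsto_log_comp_add_sub_log 1)
    rw [add_zero] at h
    refine h.congr fun v => ?_
    ring
  have hFTC := integral_Ioi_of_hasDerivAt_of_tendsto hcont.continuousWithinAt hderiv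
    (hquot.sub hlog) hlim
  have hF₀ : F 0 = 0 := by simp [hF]
  rw [integral_sub hquot hlog, integral_const_mul, integral_Ioi_exp_neg_mul_mul_log hx, hF₀,
    sub_zero, mul_div_cancel₀ _ hx.ne'] at hFTC
  linarith

theorem hasDerivAt_log_add_sub_log_add_div {a b v : ℝ} (hab : a ≠ b) (ha : v + a ≠ 0)
    (hb : v + b ≠ 0) :
    HasDerivAt (fun v : ℝ => (log (v + a) - log (v + b)) / (b - a)) ((v + a) * (v + b))⁻¹ v := by
  have hsub : b - a ≠ 0 := sub_ne_zero.2 hab.symm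
  have hlog {c : ℝ} (hc : v + c ≠ 0) : HasDerivAt (fun v : ℝ => log (v + c)) (1 / (v + c)) v :=
    ((hasDerivAt_id v).add_const c).log hc
  refine (((hlog ha).sub (hlog hb)).div_const (b - a)).congr_deriv ?_
  field_simp
  ring

theorem tendsto_log_add_sub_log_add_div_atTop (a b : ℝ) :
    Tendsto (fun v : ℝ => (log (v + a) - log (v + b)) / (b - a)) atTop (𝓝 0) := by
  simpa using
    ((tendsto_log_comp_add_sub_log a).sub (tendsto_log_comp_add_sub_log b)).div_const (b - a)

theorem integrableOn_Ioi_inv_mul_add {a b : ℝ} (ha : 0 < a) (hb : 0 < b) (hab : a ≠ b) :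
    IntegrableOn (fun v : ℝ => ((v + a) * (v + b))⁻¹) (Ioi 0) :=
  integrableOn_Ioi_deriv_of_nonneg'
    (fun _ hv => hasDerivAt_log_add_sub_log_add_div hab (add_pos_of_nonneg_of_pos hv ha).ne'
      (add_pos_of_nonneg_of_pos hv hb).ne')
    (fun v (hv : 0 < v) => by positivity) (tendsto_log_add_sub_log_add_div_atTop a b)

theorem integral_Ioi_inv_mul_add {a b : ℝ} (ha : 0 < a) (hb : 0 < b) (hab : a ≠ b) :
    ∫ v in Ioi (0 : ℝ), ((v + a) * (v + b))⁻¹ = (log b - log a) / (b - a) := by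
  rw [integral_Ioi_of_hasDerivAt_of_tendsto'
    (fun _ hv => hasDerivAt_log_add_sub_log_add_div hab (add_pos_of_nonneg_of_pos hv ha).ne'
      (add_pos_of_nonneg_of_pos hv hb).ne')
    (integrableOn_Ioi_inv_mul_add ha hb hab) (tendsto_log_add_sub_log_add_div_atTop a b)]
  ring_nf

theorem integrableOn_Ioi_exp_neg_mul_div_add {x c : ℝ} (hx : 0 < x) (hc : 0 < c) :
    IntegrableOn (fun v : ℝ => exp (-(x * v)) / (v + c)) (Ioi 0) := by
  have hexp : IntegrableOn (fun v : ℝ => exp (-(x * v))) (Ioi 0) := by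
    simpa only [neg_mul] using exp_neg_integrableOn_Ioi 0 hx
  have hmeas : Measurable fun v : ℝ => exp (-(x * v)) / (v + c) := by fun_prop
  refine (hexp.div_const c).mono' hmeas.aestronglyMeasurable
    (ae_restrict_of_forall_mem measurableSet_Ioi ?_)
  intro v (hv : 0 < v)
  rw [norm_of_nonneg (by positivity)]
  gcongr
  linarith

theorem integral_Ioi_exp_neg_mul_div_add {x : ℝ} (hx : 0 < x) (c : ℝ) :
    ∫ v in Ioi (0 : ℝ), exp (-(x * v)) / (v + c)
      = ∫ u in Ioi (0 : ℝ), exp (-u) / (u + c * x) := by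
  have h := integral_comp_mul_left_Ioi (fun u => exp (-u) / (u + c * x)) 0 hx
  rw [mul_zero, smul_eq_mul, eq_inv_mul_iff_mul_eq₀ hx.ne', ← integral_const_mul] at h
  rw [← h]
  congr! 2
  rw [mul_comm c x, ← mul_add, mul_div_assoc', mul_div_mul_left _ _ hx.ne']

theorem integral_Ioi_exp_neg_mul_sub_inv_div_mul_add_two {x : ℝ} (hx : 0 < x) :
    ∫ v in Ioi (0 : ℝ), (exp (-(x * v)) - (v + 1)⁻¹) / (v * (v + 2))
      = (log 2 - eulerMascheroniConstant - log x
          - ∫ u in Ioi (0 : ℝ), exp (-u) / (u + 2 * x)) / 2 := by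
  have hquot := integrableOn_Ioi_exp_neg_mul_sub_inv_div hx
  have hexp := integrableOn_Ioi_exp_neg_mul_div_add hx two_pos
  have h₁₂ : (1 : ℝ) ≠ 2 := OfNat.one_ne_ofNat 2
  have hinv := integrableOn_Ioi_inv_mul_add one_pos two_pos h₁₂
  have hsplit : ∀ v ∈ Ioi (0 : ℝ), (exp (-(x * v)) - (v + 1)⁻¹) / (v * (v + 2))
      = ((exp (-(x * v)) - (v + 1)⁻¹) / v - exp (-(x * v)) / (v + 2)
          + ((v + 1) * (v + 2))⁻¹) / 2 := by
    intro v (hv : 0 < v)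
    field_simp
    ring
  rw [setIntegral_congr_fun measurableSet_Ioi hsplit, integral_div,
    integral_add (by exact hquot.sub hexp) hinv, integral_sub hquot hexp,
    integral_Ioi_exp_neg_mul_sub_inv_div hx, integral_Ioi_exp_neg_mul_div_add hx,
    integral_Ioi_inv_mul_add one_pos two_pos h₁₂, log_one]
  ring

theorem hasDerivAt_neg_log_div_add_sq_add_one (u : ℝ) {a v : ℝ} (hva : v + a ≠ 0) :
    HasDerivAt (fun v : ℝ => -log ((u / (v + a)) ^ 2 + 1))
      (2 * u ^ 2 / ((v + a) * (u ^ 2 + (v + a) ^ 2))) v := by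
  have hquot : HasDerivAt (fun v : ℝ => u / (v + a)) (-u / (v + a) ^ 2) v := by
    simpa using (hasDerivAt_const v u).fun_div ((hasDerivAt_id v).add_const a) hva
  refine (((hquot.fun_pow 2).add_const 1).log (by positivity)).neg.congr_deriv ?_
  simp only [Nat.cast_ofNat, Nat.reduceSub, pow_one]
  field_simp

theorem tendsto_neg_log_div_add_sq_add_one_atTop (u a : ℝ) :
    Tendsto (fun v : ℝ => -log ((u / (v + a)) ^ 2 + 1)) atTop (𝓝 0) := by
  have hquot : Tendsto (fun v : ℝ => u / (v + a)) atTop (𝓝 0) :=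
    (tendsto_atTop_add_const_right _ a tendsto_id).const_div_atTop u
  simpa using (((hquot.pow 2).add_const 1).log (by norm_num)).neg

theorem integrableOn_Ioi_two_mul_sq_div (u : ℝ) {a : ℝ} (ha : 0 < a) :
    IntegrableOn (fun v : ℝ => 2 * u ^ 2 / ((v + a) * (u ^ 2 + (v + a) ^ 2))) (Ioi 0) :=
  integrableOn_Ioi_deriv_of_nonneg'
    (fun _ hv => hasDerivAt_neg_log_div_add_sq_add_one u (add_pos_of_nonneg_of_pos hv ha).ne')
    (fun v (hv : 0 < v) => by positivity) (tendsto_neg_log_div_add_sq_add_one_atTop u a)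

theorem integral_Ioi_two_mul_sq_div (u : ℝ) {a : ℝ} (ha : 0 < a) :
    ∫ v in Ioi (0 : ℝ), 2 * u ^ 2 / ((v + a) * (u ^ 2 + (v + a) ^ 2))
      = log ((u / a) ^ 2 + 1) := by
  rw [integral_Ioi_of_hasDerivAt_of_tendsto'
    (fun _ hv => hasDerivAt_neg_log_div_add_sq_add_one u (add_pos_of_nonneg_of_pos hv ha).ne')
    (integrableOn_Ioi_two_mul_sq_div u ha) (tendsto_neg_log_div_add_sq_add_one_atTop u a),
    zero_add, zero_sub, neg_neg]

theorem integral_Ioi_cos_mul_div_sq_add_sq_mul_sq_div (x : ℝ) {a b : ℝ} (ha : 0 < a) (hb : 0 < b)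
    (hab : a ≠ b) :
    ∫ u in Ioi (0 : ℝ), cos (x * u) / (u ^ 2 + a ^ 2) * (u ^ 2 / (u ^ 2 + b ^ 2))
      = π / 2 * ((b * exp (-(b * |x|)) - a * exp (-(a * |x|))) / (b ^ 2 - a ^ 2)) := by
  have hsub : b ^ 2 - a ^ 2 ≠ 0 := by
    rw [sub_ne_zero, Ne, sq_eq_sq₀ hb.le ha.le]
    exact hab.symm
  have hsplit (u : ℝ) : cos (x * u) / (u ^ 2 + a ^ 2) * (u ^ 2 / (u ^ 2 + b ^ 2))
      = (b ^ 2 * (cos (x * u) / (u ^ 2 + b ^ 2)) - a ^ 2 * (cos (x * u) / (u ^ 2 + a ^ 2)))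
        / (b ^ 2 - a ^ 2) := by
    have hua : u ^ 2 + a ^ 2 ≠ 0 := by positivity
    have hub : u ^ 2 + b ^ 2 ≠ 0 := by positivity
    field_simp
    ring
  have hint {c : ℝ} (hc : 0 < c) :
      IntegrableOn (fun u => c ^ 2 * (cos (x * u) / (u ^ 2 + c ^ 2))) (Ioi 0) :=
    ((integrable_cos_mul_div_sq_add_sq x hc.ne').const_mul _).integrableOn
  simp only [hsplit]
  rw [integral_div, integral_sub (hint hb) (hint ha), integral_const_mul, integral_const_mul,
    integral_Ioi_cos_mul_div_sq_add_sq x hb, integral_Ioi_cos_mul_div_sq_add_sq x ha]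
  field_simp

theorem integral_Ioi_cos_mul_div_sq_add_one_mul_two_mul_sq_div {x v : ℝ} (hx : 0 ≤ x) (hv : 0 < v) :
    ∫ u in Ioi (0 : ℝ), cos (x * u) / (u ^ 2 + 1) * (2 * u ^ 2 / ((v + 1) * (u ^ 2 + (v + 1) ^ 2)))
      = π * exp (-x) * ((exp (-(x * v)) - (v + 1)⁻¹) / (v * (v + 2))) := by
  have h := integral_Ioi_cos_mul_div_sq_add_sq_mul_sq_div x one_pos (add_pos hv one_pos)
    (lt_add_of_pos_left 1 hv).ne
  have hexp : exp (-((v + 1) * x)) = exp (-x) * exp (-(x * v)) := by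
    rw [← exp_add]
    ring_nf
  rw [abs_of_nonneg hx, one_pow, one_mul, one_mul, hexp] at h
  calc ∫ u in Ioi (0 : ℝ),
        cos (x * u) / (u ^ 2 + 1) * (2 * u ^ 2 / ((v + 1) * (u ^ 2 + (v + 1) ^ 2)))
      = 2 / (v + 1) *
          ∫ u in Ioi (0 : ℝ), cos (x * u) / (u ^ 2 + 1) * (u ^ 2 / (u ^ 2 + (v + 1) ^ 2)) := by
        rw [← integral_const_mul]
        congr! 2
        rw [mul_div_mul_comm]
        ring
    _ = π * exp (-x) * ((exp (-(x * v)) - (v + 1)⁻¹) / (v * (v + 2))) := by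
        have hden : (v + 1) ^ 2 - 1 = v * (v + 2) := by ring
        rw [h, hden]
        field_simp

theorem integrable_cos_mul_div_rpow (x : ℝ) {q : ℝ} (hq : 1 / 2 < q) :
    Integrable fun u : ℝ => cos (x * u) / (u ^ 2 + 1) ^ q := by
  have hpow : Integrable fun u : ℝ => ((u ^ 2 + 1) ^ q)⁻¹ := by
    have h := integrable_rpow_neg_one_add_norm_sq (E := ℝ) (μ := volume) (r := 2 * q)
      (by rw [Module.finrank_self]; norm_num; linarith)
    refine h.congr (ae_of_all _ fun u => ?_)
    simp only [norm_eq_abs, sq_abs]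
    rw [← rpow_neg (by positivity), add_comm]
    congr 1
    ring
  exact hpow.bdd_mul (by fun_prop) (ae_of_all _ fun u => abs_cos_le_one (x * u))

theorem hasDerivAt_integral_Ioi_cos_mul_div_rpow (x : ℝ) {p : ℝ} (hp : 1 / 2 < p) :
    IntegrableOn (fun u : ℝ => cos (x * u) / (u ^ 2 + 1) ^ p * log (u ^ 2 + 1)) (Ioi 0) ∧
      HasDerivAt (fun s : ℝ => ∫ u in Ioi (0 : ℝ), cos (x * u) / (u ^ 2 + 1) ^ s)
        (-∫ u in Ioi (0 : ℝ), cos (x * u) / (u ^ 2 + 1) ^ p * log (u ^ 2 + 1)) p := by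
  obtain ⟨q, hq, hqp⟩ := exists_between hp
  exact hasDerivAt_integral_div_rpow (by fun_prop)
    (fun u => le_add_of_nonneg_left (sq_nonneg u)) (integrable_cos_mul_div_rpow x hq).integrableOn
    hqp

theorem integral_Ioi_cos_mul_div_sq_add_one_mul_log {x : ℝ} (hx : 0 < x) :
    ∫ u in Ioi (0 : ℝ), cos (x * u) / (u ^ 2 + 1) * log (u ^ 2 + 1)
      = π * exp (-x) * ((log 2 - eulerMascheroniConstant - log x
          - ∫ u in Ioi (0 : ℝ), exp (-u) / (u + 2 * x)) / 2) := by
  have hlog (u : ℝ) : ∫ v in Ioi (0 : ℝ), 2 * u ^ 2 / ((v + 1) * (u ^ 2 + (v + 1) ^ 2))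
      = log (u ^ 2 + 1) := by
    simpa only [div_one] using integral_Ioi_two_mul_sq_div u one_pos
  have hmeas : Measurable (Function.uncurry fun u v : ℝ =>
      2 * u ^ 2 / ((v + 1) * (u ^ 2 + (v + 1) ^ 2))) := by
    unfold Function.uncurry
    fun_prop
  have hint : IntegrableOn (fun u : ℝ => cos (x * u) / (u ^ 2 + 1) * log (u ^ 2 + 1)) (Ioi 0) := by
    simpa only [rpow_one] using (hasDerivAt_integral_Ioi_cos_mul_div_rpow x one_half_lt_one).1
  calc ∫ u in Ioi (0 : ℝ), cos (x * u) / (u ^ 2 + 1) * log (u ^ 2 + 1)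
      = ∫ u in Ioi (0 : ℝ), cos (x * u) / (u ^ 2 + 1) *
          ∫ v in Ioi (0 : ℝ), 2 * u ^ 2 / ((v + 1) * (u ^ 2 + (v + 1) ^ 2)) := by
        simp only [hlog]
    _ = ∫ v in Ioi (0 : ℝ), ∫ u in Ioi (0 : ℝ), cos (x * u) / (u ^ 2 + 1) *
          (2 * u ^ 2 / ((v + 1) * (u ^ 2 + (v + 1) ^ 2))) := by
        refine integral_mul_integral_swap (Measurable.aestronglyMeasurable (by fun_prop))
          hmeas.aestronglyMeasurable (fun u => ?_)
          (fun u => integrableOn_Ioi_two_mul_sq_div u one_pos)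
          (by simpa only [hlog, IntegrableOn] using hint)
        exact ae_restrict_of_forall_mem measurableSet_Ioi fun v (hv : 0 < v) => by
          simp only [Pi.zero_apply]
          positivity
    _ = ∫ v in Ioi (0 : ℝ),
          π * exp (-x) * ((exp (-(x * v)) - (v + 1)⁻¹) / (v * (v + 2))) :=
        setIntegral_congr_fun measurableSet_Ioi fun v hv =>
          integral_Ioi_cos_mul_div_sq_add_one_mul_two_mul_sq_div hx.le hv
    _ = _ := by rw [integral_const_mul, integral_Ioi_exp_neg_mul_sub_inv_div_mul_add_two hx]

theorem stmt1 (x : ℝ) (hx : 0 < x) :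
    deriv (fun s : ℝ => ∫ u in Set.Ioi (0:ℝ), Real.cos (x * u) / (u ^ 2 + 1) ^ (s + 1/2)) (1/2)
      = ((∫ u in Set.Ioi (0:ℝ), Real.exp (-u) / (u + 2 * x))
          + Real.log x + Real.eulerMascheroniConstant - Real.log 2)
        * ((Real.pi / 2) * Real.exp (-x)) := by
  have hderiv := (hasDerivAt_integral_Ioi_cos_mul_div_rpow x (p := 1 / 2 + 1 / 2)
    (by norm_num)).2.comp_add_const (1 / 2) (1 / 2)
  simp only [add_halves, rpow_one] at hderiv
  rw [hderiv.deriv, integral_Ioi_cos_mul_div_sq_add_one_mul_log hx]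
  ring
end

section
/- For every real x > 0 and every natural number n, the n-th derivative with respect to s of the function s ↦ ∫₀^∞ cos(x·u)/(u² + 1)^{s + 1/2} du, evaluated at s = 1/2, equals (−1)ⁿ · ∫₀^∞ cos(x·u) · (log(u² + 1))ⁿ / (u² + 1) du. -/
/-! With `t = -(s + 1/2)` we have `(u ^ 2 + 1) ^ t = exp (t * X u)` for `X u = log (u ^ 2 + 1)`, so
the integral is a moment-generating function of `X` weighted by the bounded function `cos (x * u)`.
Near a point interior to the set of `t` for which `exp (t * X)` is integrable, `exp (t * X)` is
dominated by `exp (a * X) + exp (b * X)` for some `a`, `b` in that interior, and this bound stays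
integrable after multiplication by any power of `X`. Hence one may differentiate under the integral,
each derivative in `t` bringing down a factor `X` and each derivative in `s` a factor `-X`. For this
`X` the exponents `t < -1/2`, that is `s > 0`, are interior. -/

open MeasureTheory ProbabilityTheory Filter Module
open scoped ENNReal

lemma exp_mul_le_exp_mul_add_exp_mul {a b t : ℝ} (ht : t ∈ Set.Icc a b) (y : ℝ) :
    Real.exp (t * y) ≤ Real.exp (a * y) + Real.exp (b * y) := by
  rcases le_total 0 y with hy | hy
  · exact (Real.exp_le_exp.2 (mul_le_mul_of_nonneg_right ht.2 hy)).trans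
      (le_add_of_nonneg_left (Real.exp_nonneg _))
  · exact (Real.exp_le_exp.2 (mul_le_mul_of_nonpos_right ht.1 hy)).trans
      (le_add_of_nonneg_right (Real.exp_nonneg _))

section WeightedExponentialIntegral

variable {Ω E : Type*} [MeasurableSpace Ω] [NormedAddCommGroup E] [NormedSpace ℝ E]
  {μ : Measure Ω} {X : Ω → ℝ} {w : Ω → E} {t : ℝ}

theorem hasDerivAt_integral_pow_mul_exp_mul_smul (hw : MemLp w ∞ μ)
    (ht : t ∈ interior (integrableExpSet X μ)) (n : ℕ) :
    HasDerivAt (fun t ↦ ∫ ω, (X ω ^ n * Real.exp (t * X ω)) • w ω ∂μ)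
      (∫ ω, (X ω ^ (n + 1) * Real.exp (t * X ω)) • w ω ∂μ) t := by
  have hX : AEMeasurable X μ := aemeasurable_of_mem_interior_integrableExpSet ht
  have hmeas (m : ℕ) (r : ℝ) :
      AEStronglyMeasurable (fun ω ↦ (X ω ^ m * Real.exp (r * X ω)) • w ω) μ :=
    AEMeasurable.aestronglyMeasurable (by fun_prop) |>.smul hw.1
  obtain ⟨a, b, htab, hab_nhds, hab⟩ :=
    exists_Icc_mem_subset_of_mem_nhds (isOpen_interior.mem_nhds ht)
  have ha : a ∈ interior (integrableExpSet X μ) := hab (Set.left_mem_Icc.2 (htab.1.trans htab.2))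
  have hb : b ∈ interior (integrableExpSet X μ) := hab (Set.right_mem_Icc.2 (htab.1.trans htab.2))
  refine (hasDerivAt_integral_of_dominated_loc_of_deriv_le
    (bound := fun ω ↦
      (|X ω| ^ (n + 1) * Real.exp (a * X ω) + |X ω| ^ (n + 1) * Real.exp (b * X ω)) * ‖w ω‖)
    (F' := fun r ω ↦ (X ω ^ (n + 1) * Real.exp (r * X ω)) • w ω)
    hab_nhds (.of_forall (hmeas n)) ?integrable (hmeas (n + 1) t) ?dominated ?integrable_bound
    ?hasDerivAt).2
  case integrable =>
    exact (integrable_pow_mul_exp_of_mem_interior_integrableExpSet ht n).smul_of_top_left hw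
  case dominated =>
    refine .of_forall fun ω r hr ↦ ?_
    rw [norm_smul, norm_mul, norm_pow, Real.norm_eq_abs, Real.norm_of_nonneg (Real.exp_nonneg _),
      ← mul_add]
    gcongr
    exact exp_mul_le_exp_mul_add_exp_mul hr _
  case integrable_bound =>
    exact ((integrable_pow_abs_mul_exp_of_mem_interior_integrableExpSet ha (n + 1)).add
      (integrable_pow_abs_mul_exp_of_mem_interior_integrableExpSet hb (n + 1))).smul_of_top_left
        hw.norm
  case hasDerivAt =>
    refine .of_forall fun ω r _ ↦ HasDerivAt.smul_const ?_ _
    refine ((hasDerivAt_mul_const (X ω)).exp.const_mul (X ω ^ n)).congr_deriv ?_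
    ring

theorem iteratedDeriv_integral_exp_mul_smul (hw : MemLp w ∞ μ)
    (ht : t ∈ interior (integrableExpSet X μ)) (n : ℕ) :
    iteratedDeriv n (fun t ↦ ∫ ω, Real.exp (t * X ω) • w ω ∂μ) t
      = ∫ ω, (X ω ^ n * Real.exp (t * X ω)) • w ω ∂μ := by
  induction n generalizing t with
  | zero => simp only [iteratedDeriv_zero, pow_zero, one_mul]
  | succ n ih =>
    rw [iteratedDeriv_succ, ← (hasDerivAt_integral_pow_mul_exp_mul_smul hw ht n).deriv]
    apply EventuallyEq.deriv_eq
    filter_upwards [isOpen_interior.mem_nhds ht] with r hr using ih hr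

theorem iteratedDeriv_integral_rpow_smul {f : Ω → ℝ} (hf : ∀ ω, 0 < f ω) (hw : MemLp w ∞ μ)
    (ht : t ∈ interior {r | Integrable (fun ω ↦ f ω ^ r) μ}) (n : ℕ) :
    iteratedDeriv n (fun t ↦ ∫ ω, f ω ^ t • w ω ∂μ) t
      = ∫ ω, (Real.log (f ω) ^ n * f ω ^ t) • w ω ∂μ := by
  have hexp (r : ℝ) (ω : Ω) : f ω ^ r = Real.exp (r * Real.log (f ω)) := by
    rw [Real.rpow_def_of_pos (hf ω), mul_comm]
  simp only [hexp] at ht ⊢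
  exact iteratedDeriv_integral_exp_mul_smul hw ht n

end WeightedExponentialIntegral

section JapaneseBracket

variable {V E : Type*} [NormedAddCommGroup V] [NormedSpace ℝ V] [FiniteDimensional ℝ V]
  [MeasurableSpace V] [BorelSpace V] [NormedAddCommGroup E] [NormedSpace ℝ E]
  (μ : Measure V) [μ.IsAddHaarMeasure] {t : ℝ}

theorem integrable_norm_sq_add_one_rpow (ht : t < -(finrank ℝ V / 2)) :
    Integrable (fun v : V ↦ (‖v‖ ^ 2 + 1) ^ t) μ := by
  have hdim : (finrank ℝ V : ℝ) < -2 * t := by linarith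
  convert integrable_rpow_neg_one_add_norm_sq (μ := μ) hdim using 3 <;> ring

theorem iteratedDeriv_setIntegral_norm_sq_add_one_rpow_smul {S : Set V} {w : V → E}
    (hw : MemLp w ∞ (μ.restrict S)) (ht : t < -(finrank ℝ V / 2)) (n : ℕ) :
    iteratedDeriv n (fun t ↦ ∫ v in S, (‖v‖ ^ 2 + 1) ^ t • w v ∂μ) t
      = ∫ v in S, (Real.log (‖v‖ ^ 2 + 1) ^ n * (‖v‖ ^ 2 + 1) ^ t) • w v ∂μ :=
  iteratedDeriv_integral_rpow_smul (fun _ ↦ by positivity) hw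
    (interior_maximal (fun _ hr ↦ (integrable_norm_sq_add_one_rpow μ hr).integrableOn)
      isOpen_Iio ht) n

end JapaneseBracket

theorem stmt2_general (x : ℝ) {s : ℝ} (hs : 0 < s) (n : ℕ) :
    iteratedDeriv n
      (fun s : ℝ ↦ ∫ u in Set.Ioi (0 : ℝ), Real.cos (x * u) / (u ^ 2 + 1) ^ (s + 1/2)) s
      = (-1) ^ n * ∫ u in Set.Ioi (0 : ℝ),
          Real.cos (x * u) * Real.log (u ^ 2 + 1) ^ n / (u ^ 2 + 1) ^ (s + 1/2) := by
  have hcos : MemLp (fun u ↦ Real.cos (x * u)) ∞ (volume.restrict (Set.Ioi 0)) :=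
    memLp_top_of_bound (Measurable.aestronglyMeasurable (by fun_prop)) 1
      (.of_forall fun u ↦ Real.abs_cos_le_one (x * u))
  have ht : -(1/2) - s < -(finrank ℝ ℝ / 2 : ℝ) := by
    rw [finrank_self, Nat.cast_one]
    linarith
  have hdiv (c r u : ℝ) : c / (u ^ 2 + 1) ^ (r + 1/2) = (‖u‖ ^ 2 + 1) ^ (-(1/2) - r) • c := by
    rw [Real.norm_eq_abs, sq_abs, ← neg_add', add_comm (1/2), Real.rpow_neg (by positivity),
      smul_eq_mul, div_eq_inv_mul]
  simp only [hdiv]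
  rw [iteratedDeriv_comp_const_sub n
      (fun t ↦ ∫ u in Set.Ioi (0 : ℝ), (‖u‖ ^ 2 + 1) ^ t • Real.cos (x * u))]
  beta_reduce
  rw [iteratedDeriv_setIntegral_norm_sq_add_one_rpow_smul volume hcos ht, smul_eq_mul]
  congr 2 with u
  rw [Real.norm_eq_abs, sq_abs, smul_eq_mul, smul_eq_mul]
  ring

theorem stmt2 (x : ℝ) (hx : 0 < x) (n : ℕ) :
    iteratedDeriv n (fun s : ℝ => ∫ u in Set.Ioi (0:ℝ), Real.cos (x * u) / (u ^ 2 + 1) ^ (s + 1/2)) (1/2)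
      = (-1) ^ n * ∫ u in Set.Ioi (0:ℝ), Real.cos (x * u) * (Real.log (u ^ 2 + 1)) ^ n / (u ^ 2 + 1) := by
  simpa only [add_halves, Real.rpow_one] using stmt2_general x one_half_pos n
end

section
/- For real x > 0, define F(s) = π^{−1/2} · (2/x)^{s} · Γ(s + 1/2) · ∫₀^∞ cos(x·u)/(u² + 1)^{s + 1/2} du for real s > −1/2. Then the derivative of F at s = 1/2 equals √(π/(2x)) · e^{−x} · ∫₀^∞ e^{−u}/(u + 2x) du. -/
/-!
For `s > 0` the function being differentiated is the modified Bessel function `K_s(x)`: writing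
`(u ^ 2 + 1) ^ (-s - 1/2)` as a Gamma integral over `y` and swapping integrals leaves the cosine
transform of a Gaussian, and the remaining integral becomes `½ ∫ exp (-x cosh t + s t) dt` under
`y = exp t`. This is a moment generating function in `s`, so it may be differentiated under the
integral sign.

At `s = 1/2` put `w = sinh (t / 2)`, so that `cosh t = 1 + 2 w ^ 2`, and write
`(t / 2) / cosh (t / 2)` as `∫ a in 0..w, (1 + w ^ 2 - a ^ 2)⁻¹`. Integrating over `w` first, the
substitution `u = 2 x (w ^ 2 - a ^ 2)` separates the variables: the `u`-integral is the exponential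
integral and the `a`-integral is Gaussian.
-/

open MeasureTheory Set Filter Topology Real

theorem integral_eq_setIntegral_Ioi_add_comp_neg {E : Type*} [NormedAddCommGroup E]
    [NormedSpace ℝ E] {f : ℝ → E} (hf : Integrable f) :
    ∫ t, f t = ∫ t in Ioi 0, (f t + f (-t)) := by
  rw [integral_add hf.integrableOn hf.comp_neg.integrableOn, integral_comp_neg_Ioi, neg_zero,
    add_comm, intervalIntegral.integral_Iic_add_Ioi hf.integrableOn hf.integrableOn]

theorem integral_exp_smul_comp_exp {E : Type*} [NormedAddCommGroup E] [NormedSpace ℝ E]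
    (g : ℝ → E) : ∫ t, exp t • g (exp t) = ∫ y in Ioi 0, g y := by
  rw [← range_exp, ← image_univ, integral_image_eq_integral_abs_deriv_smul MeasurableSet.univ
    (fun t _ => (hasDerivAt_exp t).hasDerivWithinAt) exp_injective.injOn, Measure.restrict_univ]
  simp only [abs_exp]

theorem measurableSet_lt_fst_lt_snd (c : ℝ) : MeasurableSet {z : ℝ × ℝ | c < z.1 ∧ z.1 < z.2} :=
  (measurableSet_lt measurable_const measurable_fst).inter
    (measurableSet_lt measurable_fst measurable_snd)

theorem setIntegral_Ioi_setIntegral_Ioi_swap {E : Type*} [NormedAddCommGroup E] [NormedSpace ℝ E]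
    {f : ℝ → ℝ → E} {c : ℝ}
    (hf : IntegrableOn (Function.uncurry f) {z | c < z.1 ∧ z.1 < z.2}) :
    ∫ a in Ioi c, ∫ w in Ioi a, f a w = ∫ w in Ioi c, ∫ a in Ioo c w, f a w := by
  have hswap := integral_integral_swap
    (f := fun a w => {z : ℝ × ℝ | c < z.1 ∧ z.1 < z.2}.indicator (Function.uncurry f) (a, w))
    ((integrable_indicator_iff (measurableSet_lt_fst_lt_snd c)).2 hf)
  convert hswap using 1
  · rw [← integral_indicator measurableSet_Ioi]
    congr 1 with a
    by_cases ha : c < a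
    · simp only [indicator_of_mem (mem_Ioi.2 ha), ← integral_indicator measurableSet_Ioi]
      simp [indicator, ha]
    · simp [indicator, ha]
  · rw [← integral_indicator measurableSet_Ioi]
    congr 1 with w
    rw [indicator_apply_eq_self.2 fun hw => by
        rw [Ioo_eq_empty (by simpa using hw), setIntegral_empty],
      ← integral_indicator measurableSet_Ioo]
    rfl

theorem hasDerivAt_integral_mul_exp {Ω : Type*} [MeasurableSpace Ω] {μ : Measure Ω} {ρ X : Ω → ℝ}
    (hρ : Measurable ρ) (hρ0 : 0 ≤ ρ) {t : ℝ}
    (h : ∀ᶠ s in 𝓝 t, Integrable (fun ω => ρ ω * exp (s * X ω)) μ) :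
    Integrable (fun ω => ρ ω * (X ω * exp (t * X ω))) μ ∧
      HasDerivAt (fun s => ∫ ω, ρ ω * exp (s * X ω) ∂μ)
        (∫ ω, ρ ω * (X ω * exp (t * X ω)) ∂μ) t := by
  set ν : Measure Ω := μ.withDensity fun ω => ((ρ ω).toNNReal : ENNReal)
  have hsmul (g : Ω → ℝ) (ω : Ω) : (ρ ω).toNNReal • g ω = ρ ω * g ω := by
    rw [NNReal.smul_def, coe_toNNReal _ (hρ0 ω), smul_eq_mul]
  have integrable_iff (g : Ω → ℝ) : Integrable g ν ↔ Integrable (fun ω => ρ ω * g ω) μ := by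
    simp only [ν, integrable_withDensity_iff_integrable_smul hρ.real_toNNReal, hsmul]
  have integral_eq (g : Ω → ℝ) : ∫ ω, g ω ∂ν = ∫ ω, ρ ω * g ω ∂μ := by
    simp only [ν, integral_withDensity_eq_integral_smul hρ.real_toNNReal, hsmul]
  have ht : t ∈ interior (ProbabilityTheory.integrableExpSet X ν) :=
    mem_interior_iff_mem_nhds.2 (h.mono fun s hs => (integrable_iff _).2 hs)
  constructor
  · rw [← integrable_iff]
    simpa using ProbabilityTheory.integrable_pow_mul_exp_of_mem_interior_integrableExpSet ht 1
  · simp only [← integral_eq]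
    exact ProbabilityTheory.hasDerivAt_mgf ht

theorem integral_cos_mul_exp_neg_mul_sq (x : ℝ) {b : ℝ} (hb : 0 < b) :
    ∫ u : ℝ, cos (x * u) * exp (-b * u ^ 2) = √(π / b) * exp (-x ^ 2 / (4 * b)) := by
  have hint : Integrable fun u : ℝ => Complex.exp (Complex.I * x * u) * Complex.exp (-b * u ^ 2) :=
    (integrable_cexp_quadratic (b := b) (by simpa using hb) (Complex.I * x) 0).congr
      (.of_forall fun u => by simp only [← Complex.exp_add]; ring_nf)
  have hval : ∫ u : ℝ, Complex.exp (Complex.I * x * u) * Complex.exp (-b * u ^ 2) =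
      ((√(π / b) * exp (-x ^ 2 / (4 * b)) : ℝ) : ℂ) := by
    rw [fourierIntegral_gaussian (by simpa using hb) x, sqrt_eq_rpow, Complex.ofReal_mul,
      Complex.ofReal_cpow (by positivity)]
    push_cast
    rfl
  rw [← Complex.ofReal_re (√(π / b) * _), ← hval, ← RCLike.re_eq_complex_re, ← integral_re hint]
  congr 1 with u
  have hcos : Complex.I * x * u = ((x * u : ℝ) : ℂ) * Complex.I := by push_cast; ring
  have hgauss : (-b * u ^ 2 : ℂ) = ((-b * u ^ 2 : ℝ) : ℂ) := by push_cast; rfl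
  rw [hcos, hgauss, ← Complex.ofReal_exp, RCLike.re_eq_complex_re, Complex.re_mul_ofReal,
    Complex.exp_ofReal_mul_I_re]

theorem integral_Ioi_cos_mul_exp_neg_mul_sq (x : ℝ) {b : ℝ} (hb : 0 < b) :
    ∫ u in Ioi 0, cos (x * u) * exp (-b * u ^ 2) = √(π / b) / 2 * exp (-x ^ 2 / (4 * b)) := by
  have heven := integral_comp_abs (f := fun u => cos (x * u) * exp (-b * u ^ 2))
  have habs (u : ℝ) : cos (x * |u|) = cos (x * u) := by
    rcases abs_choice u with h | h <;> simp [h]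
  simp only [sq_abs, habs, integral_cos_mul_exp_neg_mul_sq x hb] at heven
  linarith

theorem integral_inv_sq_sub_sq {b c : ℝ} (hbc : |b| < c) :
    ∫ a in (0 : ℝ)..b, (c ^ 2 - a ^ 2)⁻¹ = artanh (b / c) / c := by
  have hc : 0 < c := (abs_nonneg b).trans_lt hbc
  have hpos : ∀ a ∈ uIcc 0 b, 0 < c + a ∧ 0 < c - a := fun a ha => by
    have hac : |a| < c := by simpa using (abs_sub_left_of_mem_uIcc ha).trans_lt (by simpa using hbc)
    constructor <;> linarith [abs_lt.1 hac]
  have hfactor (a : ℝ) : c ^ 2 - a ^ 2 = (c + a) * (c - a) := by ring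
  have hderiv : ∀ a ∈ uIcc 0 b,
      HasDerivAt (fun a => (log (c + a) - log (c - a)) / (2 * c)) (c ^ 2 - a ^ 2)⁻¹ a := by
    intro a ha
    obtain ⟨hadd, hsub⟩ := hpos a ha
    refine (((((hasDerivAt_id' a).const_add c).log hadd.ne').sub
      (((hasDerivAt_id' a).const_sub c).log hsub.ne')).div_const (2 * c)).congr_deriv ?_
    rw [hfactor]
    field_simp
    ring
  have hcont : ContinuousOn (fun a => (c ^ 2 - a ^ 2)⁻¹) (uIcc 0 b) :=
    ContinuousOn.inv₀ (by fun_prop) fun a ha => by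
      rw [hfactor]
      exact (mul_pos (hpos a ha).1 (hpos a ha).2).ne'
  obtain ⟨hadd, hsub⟩ := hpos b right_mem_uIcc
  have hmem : b / c ∈ Icc (-1) 1 := by
    rw [mem_Icc, le_div_iff₀ hc, div_le_iff₀ hc]
    constructor <;> linarith
  rw [intervalIntegral.integral_eq_sub_of_hasDerivAt hderiv hcont.intervalIntegrable,
    artanh_eq_half_log hmem, show (1 + b / c) / (1 - b / c) = (c + b) / (c - b) by field_simp,
    log_div hadd.ne' hsub.ne']
  simp only [add_zero, sub_zero, sub_self, zero_div]
  field_simp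

theorem cosh_eq_one_add_two_mul_sinh_half_sq (t : ℝ) : cosh t = 1 + 2 * sinh (t / 2) ^ 2 := by
  rw [← mul_div_cancel₀ t two_ne_zero, cosh_two_mul, cosh_sq, mul_div_cancel_left₀ _ two_ne_zero]
  ring

theorem one_add_sq_div_two_le_cosh (t : ℝ) : 1 + t ^ 2 / 2 ≤ cosh t := by
  have hsq : |t / 2| ^ 2 ≤ |sinh (t / 2)| ^ 2 := by
    rw [abs_sinh]
    gcongr
    exact self_le_sinh_iff.2 (abs_nonneg _)
  rw [sq_abs, sq_abs] at hsq
  rw [cosh_eq_one_add_two_mul_sinh_half_sq]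
  linarith

/-- The modified Bessel function of the second kind (Macdonald function) `K_s(x)`, for real order
`s` and `x > 0`. The symmetric integral over the whole line is used, rather than that of
`exp (-x cosh t) cosh (s t)` over `(0, ∞)`, because it is a moment generating function in `s`. -/
noncomputable def besselK (s x : ℝ) : ℝ :=
  1 / 2 * ∫ t, exp (-(x * cosh t)) * exp (s * t)

section

variable {s x : ℝ}

theorem integrable_exp_neg_mul_cosh_mul_exp (s : ℝ) (hx : 0 < x) :
    Integrable fun t => exp (-(x * cosh t)) * exp (s * t) := by
  refine ((integrable_exp_neg_mul_sq (b := x / 4) (by positivity)).const_mul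
    (exp (s ^ 2 / x))).mono' (by fun_prop) (.of_forall fun t => ?_)
  have hcosh : x * (1 + t ^ 2 / 2) ≤ x * cosh t := by
    gcongr
    exact one_add_sq_div_two_le_cosh t
  have hsq : s * t ≤ s ^ 2 / x + x / 4 * t ^ 2 := by
    have : s ^ 2 / x + x / 4 * t ^ 2 - s * t = (s - x * t / 2) ^ 2 / x := by field_simp; ring
    have : 0 ≤ (s - x * t / 2) ^ 2 / x := by positivity
    linarith
  rw [norm_of_nonneg (by positivity), ← exp_add, ← exp_add]
  exact exp_le_exp.2 (by linarith)

theorem hasDerivAt_besselK (s : ℝ) (hx : 0 < x) :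
    HasDerivAt (fun s => besselK s x)
      (∫ t in Ioi 0, t * sinh (s * t) * exp (-(x * cosh t))) s := by
  obtain ⟨hint, hderiv⟩ := hasDerivAt_integral_mul_exp (X := fun t => t) (by fun_prop)
    (fun t => (exp_pos _).le) (t := s)
    (.of_forall fun s => integrable_exp_neg_mul_cosh_mul_exp s hx)
  refine (hderiv.const_mul (1 / 2)).congr_deriv ?_
  rw [integral_eq_setIntegral_Ioi_add_comp_neg hint, ← integral_const_mul]
  congr 1 with t
  rw [cosh_neg, sinh_eq, mul_neg]
  ring

theorem besselK_eq_setIntegral_Ioi_rpow (s x : ℝ) :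
    besselK s x = 1 / 2 * ∫ y in Ioi 0, y ^ (s - 1) * exp (-(x / 2 * (y + y⁻¹))) := by
  rw [besselK, ← integral_exp_smul_comp_exp]
  congr 2 with t
  have hpow : exp t * exp t ^ (s - 1) = exp (s * t) := by
    rw [← exp_mul, ← exp_add]
    ring_nf
  have hcosh : x / 2 * (exp t + (exp t)⁻¹) = x * cosh t := by
    rw [cosh_eq, exp_neg]
    ring
  rw [smul_eq_mul, ← mul_assoc, hpow, hcosh, mul_comm]

theorem setIntegral_Ioi_rpow_mul_exp_neg_mul_sq_add_one {p : ℝ} (hx : 0 < x) (hp : 0 < p)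
    (u : ℝ) :
    ∫ y in Ioi 0, y ^ (p - 1) * exp (-(x / 2 * (u ^ 2 + 1) * y)) =
      (2 / x) ^ p * Gamma p / (u ^ 2 + 1) ^ p := by
  rw [integral_rpow_mul_exp_neg_mul_Ioi hp (by positivity), one_div, mul_inv, inv_div,
    ← div_eq_mul_inv, div_rpow (by positivity) (by positivity), div_mul_eq_mul_div]

theorem setIntegral_Ioi_cos_mul_rpow_mul_exp (s : ℝ) {y : ℝ} (hx : 0 < x) (hy : 0 < y) :
    ∫ u in Ioi 0, cos (x * u) * (y ^ (s + 1 / 2 - 1) * exp (-(x / 2 * (u ^ 2 + 1) * y))) =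
      √π * (2 / x) ^ (1 / 2 : ℝ) * (1 / 2 * (y ^ (s - 1) * exp (-(x / 2 * (y + y⁻¹))))) := by
  have hsplit (u : ℝ) :
      cos (x * u) * (y ^ (s + 1 / 2 - 1) * exp (-(x / 2 * (u ^ 2 + 1) * y))) =
        y ^ (s + 1 / 2 - 1) * exp (-(x / 2 * y)) *
          (cos (x * u) * exp (-(x / 2 * y) * u ^ 2)) := by
    rw [show -(x / 2 * (u ^ 2 + 1) * y) = -(x / 2 * y) + -(x / 2 * y) * u ^ 2 by ring, exp_add]
    ring
  have hsqrt : √(π / (x / 2 * y)) = √π * (2 / x) ^ (1 / 2 : ℝ) * y ^ (-(1 / 2) : ℝ) := by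
    rw [show π / (x / 2 * y) = π * (2 / x) * y⁻¹ by field_simp, sqrt_mul (by positivity),
      sqrt_mul (by positivity), sqrt_eq_rpow (2 / x), sqrt_eq_rpow y⁻¹, inv_rpow hy.le,
      rpow_neg hy.le]
  have hpow : y ^ (s - 1) = y ^ (s + 1 / 2 - 1) * y ^ (-(1 / 2) : ℝ) := by
    rw [← rpow_add hy]
    ring_nf
  have hexp : exp (-(x / 2 * (y + y⁻¹))) =
      exp (-(x / 2 * y)) * exp (-x ^ 2 / (4 * (x / 2 * y))) := by
    rw [← exp_add]
    congr 1
    field_simp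
    ring
  simp only [hsplit, integral_const_mul]
  rw [integral_Ioi_cos_mul_exp_neg_mul_sq x (by positivity), hsqrt, hpow, hexp]
  ring

theorem integrable_cos_mul_rpow_mul_exp {p : ℝ} (hx : 0 < x) (hp : 1 / 2 < p) :
    Integrable (Function.uncurry fun u y : ℝ =>
        cos (x * u) * (y ^ (p - 1) * exp (-(x / 2 * (u ^ 2 + 1) * y))))
      ((volume.restrict (Ioi 0)).prod (volume.restrict (Ioi 0))) := by
  have hp0 : 0 < p := by linarith
  suffices Integrable (Function.uncurry fun u y : ℝ =>
      y ^ (p - 1) * exp (-(x / 2 * (u ^ 2 + 1) * y)))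
      ((volume.restrict (Ioi 0)).prod (volume.restrict (Ioi 0))) from
    this.bdd_mul (c := 1) (f := fun z : ℝ × ℝ => cos (x * z.1)) (by fun_prop)
      (.of_forall fun z => abs_cos_le_one _)
  rw [integrable_prod_iff (Measurable.aestronglyMeasurable
    (by simp only [Function.uncurry_def]; fun_prop))]
  refine ⟨.of_forall fun u => ?_, ?_⟩
  · simpa only [Function.uncurry_apply_pair, IntegrableOn, rpow_one, neg_mul] using
      integrableOn_rpow_mul_exp_neg_mul_rpow (s := p - 1) (p := 1) (b := x / 2 * (u ^ 2 + 1))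
        (by linarith) one_pos (by positivity)
  · have hnorm (u : ℝ) :
        ∫ y in Ioi 0, ‖y ^ (p - 1) * exp (-(x / 2 * (u ^ 2 + 1) * y))‖ =
          (2 / x) ^ p * Gamma p * (1 + ‖u‖ ^ 2) ^ (-(2 * p) / 2) := by
      rw [neg_div, mul_div_cancel_left₀ _ two_ne_zero, rpow_neg (by positivity), ← div_eq_mul_inv,
        norm_eq_abs, sq_abs, add_comm 1, ← setIntegral_Ioi_rpow_mul_exp_neg_mul_sq_add_one hx hp0]
      refine setIntegral_congr_fun measurableSet_Ioi fun y (hy : 0 < y) => ?_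
      exact norm_of_nonneg (by positivity)
    simp only [Function.uncurry_apply_pair, hnorm]
    exact ((integrable_rpow_neg_one_add_norm_sq (E := ℝ) (μ := volume)
      (by simp only [Module.finrank_self, Nat.cast_one]; linarith)).const_mul _).restrict

theorem besselK_eq_setIntegral_Ioi_cos (hx : 0 < x) (hs : 0 < s) :
    besselK s x = π ^ (-(1 : ℝ) / 2) * (2 / x) ^ s * Gamma (s + 1 / 2) *
      ∫ u in Ioi 0, cos (x * u) / (u ^ 2 + 1) ^ (s + 1 / 2) := by
  have hfubini :
      (2 / x) ^ (s + 1 / 2) * Gamma (s + 1 / 2) *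
          ∫ u in Ioi 0, cos (x * u) / (u ^ 2 + 1) ^ (s + 1 / 2) =
        √π * (2 / x) ^ (1 / 2 : ℝ) * besselK s x := by
    calc
      _ = ∫ u in Ioi 0, ∫ y in Ioi 0,
            cos (x * u) * (y ^ (s + 1 / 2 - 1) * exp (-(x / 2 * (u ^ 2 + 1) * y))) := by
        simp only [integral_const_mul]
        rw [← integral_const_mul]
        congr 1 with u
        rw [setIntegral_Ioi_rpow_mul_exp_neg_mul_sq_add_one hx (by positivity)]
        ring
      _ = ∫ y in Ioi 0, ∫ u in Ioi 0,
            cos (x * u) * (y ^ (s + 1 / 2 - 1) * exp (-(x / 2 * (u ^ 2 + 1) * y))) :=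
        integral_integral_swap (integrable_cos_mul_rpow_mul_exp hx (by linarith))
      _ = _ := by
        rw [setIntegral_congr_fun measurableSet_Ioi fun y hy =>
          setIntegral_Ioi_cos_mul_rpow_mul_exp s hx hy, integral_const_mul, integral_const_mul,
          besselK_eq_setIntegral_Ioi_rpow]
  have hpi : π ^ (-(1 : ℝ) / 2) = (√π)⁻¹ := by
    rw [neg_div, rpow_neg pi_pos.le, sqrt_eq_rpow]
  have hx2 : (0 : ℝ) < (2 / x) ^ (1 / 2 : ℝ) := by positivity
  rw [rpow_add (by positivity)] at hfubini
  rw [hpi, mul_assoc, mul_assoc, eq_inv_mul_iff_mul_eq₀ (by positivity)]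
  apply mul_left_cancel₀ hx2.ne'
  linarith

theorem setIntegral_Ioi_mul_exp_neg_mul_sq_div {a c : ℝ} (ha : 0 ≤ a) (hc : 0 < c) :
    ∫ w in Ioi a, w * exp (-c * w ^ 2) * (1 + w ^ 2 - a ^ 2)⁻¹ =
      exp (-c * a ^ 2) * (1 / 2 * ∫ u in Ioi 0, exp (-u) / (u + c)) := by
  have hmono : StrictMonoOn (fun w => c * (w ^ 2 - a ^ 2)) (Ici a) := fun v hv w _ hvw => by
    have : 0 ≤ v := ha.trans hv
    dsimp only
    gcongr
  have htend : Tendsto (fun w => c * (w ^ 2 - a ^ 2)) atTop atTop :=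
    (tendsto_atTop_add_const_right _ _ (tendsto_pow_atTop two_ne_zero)).const_mul_atTop hc
  have himage : (fun w => c * (w ^ 2 - a ^ 2)) '' Ioi a = Ioi 0 := by
    rw [ContinuousOn.image_Ioi_of_strictMonoOn (by fun_prop) hmono htend, sub_self, mul_zero]
  have hderiv (w : ℝ) : HasDerivAt (fun w => c * (w ^ 2 - a ^ 2)) (c * (2 * w)) w := by
    simpa using ((hasDerivAt_pow 2 w).sub_const (a ^ 2)).const_mul c
  rw [← himage, integral_image_eq_integral_abs_deriv_smul measurableSet_Ioi
    (fun w _ => (hderiv w).hasDerivWithinAt) (hmono.injOn.mono Ioi_subset_Ici_self),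
    ← integral_const_mul, ← integral_const_mul]
  refine setIntegral_congr_fun measurableSet_Ioi fun w (hw : a < w) => ?_
  have hw0 : 0 < w := ha.trans_lt hw
  have hden : 0 < 1 + w ^ 2 - a ^ 2 := by nlinarith
  have hexp : exp (-c * w ^ 2) = exp (-c * a ^ 2) * exp (-(c * (w ^ 2 - a ^ 2))) := by
    rw [← exp_add]
    ring_nf
  rw [smul_eq_mul, abs_of_pos (by positivity), hexp,
    show c * (w ^ 2 - a ^ 2) + c = c * (1 + w ^ 2 - a ^ 2) by ring]
  field_simp

theorem integral_inv_one_add_sinh_sq_sub_sq (r : ℝ) :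
    ∫ a in (0 : ℝ)..sinh r, (1 + sinh r ^ 2 - a ^ 2)⁻¹ = r / cosh r := by
  have h : |sinh r| < cosh r := abs_lt_of_sq_lt_sq (by rw [cosh_sq]; linarith) (cosh_pos r).le
  rw [add_comm 1, ← cosh_sq, integral_inv_sq_sub_sq h, ← tanh_eq_sinh_div_cosh, artanh_tanh]

theorem integrableOn_mul_exp_neg_mul_sq_div {c : ℝ} (hc : 0 < c) :
    IntegrableOn
      (Function.uncurry fun a w : ℝ => w * exp (-c * w ^ 2) * (1 + w ^ 2 - a ^ 2)⁻¹)
      {z | 0 < z.1 ∧ z.1 < z.2} := by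
  have hc2 : 0 < c / 2 := half_pos hc
  have hprod : Integrable fun z : ℝ × ℝ =>
      exp (-(c / 2) * z.1 ^ 2) * (z.2 * exp (-(c / 2) * z.2 ^ 2)) :=
    (integrable_exp_neg_mul_sq hc2).mul_prod (integrable_mul_exp_neg_mul_sq hc2)
  refine hprod.integrableOn.mono' (Measurable.aestronglyMeasurable
    (by simp only [Function.uncurry_def]; fun_prop)) ?_
  refine (ae_restrict_iff' (measurableSet_lt_fst_lt_snd 0)).2 (.of_forall ?_)
  rintro ⟨a, w⟩ ⟨ha : 0 < a, haw : a < w⟩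
  have hw : 0 < w := ha.trans haw
  have hsq : a ^ 2 ≤ w ^ 2 := by gcongr
  have hden : 1 ≤ 1 + w ^ 2 - a ^ 2 := by linarith
  rw [Function.uncurry_apply_pair, norm_of_nonneg (by positivity)]
  -- Splitting the Gaussian evenly, `a ^ 2 ≤ w ^ 2` makes one half decay in `a`.
  calc
    w * exp (-c * w ^ 2) * (1 + w ^ 2 - a ^ 2)⁻¹ ≤ w * exp (-c * w ^ 2) :=
      mul_le_of_le_one_right (by positivity) (inv_le_one_of_one_le₀ hden)
    _ ≤ w * exp (-(c / 2) * a ^ 2 + -(c / 2) * w ^ 2) := by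
      gcongr
      nlinarith
    _ = _ := by
      rw [exp_add]
      ring

theorem setIntegral_Ioi_cosh_half_mul_comp_sinh_half (g : ℝ → ℝ) :
    ∫ t in Ioi 0, cosh (t / 2) / 2 * g (sinh (t / 2)) = ∫ w in Ioi 0, g w := by
  have himage : (fun t => sinh (t / 2)) '' Ioi 0 = Ioi 0 := by
    ext w
    refine ⟨?_, fun hw => ⟨2 * arsinh w, ?_, ?_⟩⟩
    · rintro ⟨t, ht, rfl⟩
      exact sinh_pos_iff.2 (half_pos ht)
    · simpa using hw
    · simp
  have hinj : InjOn (fun t => sinh (t / 2)) (Ioi 0) := fun t _ v _ h => by simpa using h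
  have hderiv (t : ℝ) : HasDerivAt (fun t => sinh (t / 2)) (cosh (t / 2) / 2) t := by
    simpa only [mul_one_div] using ((hasDerivAt_id' t).div_const 2).sinh
  have hsubst := integral_image_eq_integral_abs_deriv_smul measurableSet_Ioi
    (fun t _ => (hderiv t).hasDerivWithinAt) hinj g
  rw [himage] at hsubst
  simp only [hsubst, smul_eq_mul, abs_of_pos (half_pos (cosh_pos _))]

theorem setIntegral_Ioi_mul_sinh_half_mul_exp_neg_mul_cosh (hx : 0 < x) :
    ∫ t in Ioi 0, t * sinh (t / 2) * exp (-(x * cosh t)) =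
      √(π / (2 * x)) * exp (-x) * ∫ u in Ioi 0, exp (-u) / (u + 2 * x) := by
  have hx2 : 0 < 2 * x := by positivity
  set E := ∫ u in Ioi 0, exp (-u) / (u + 2 * x)
  calc
    _ = 4 * exp (-x) * ∫ w in Ioi 0, ∫ a in Ioo 0 w,
          w * exp (-(2 * x) * w ^ 2) * (1 + w ^ 2 - a ^ 2)⁻¹ := by
      rw [← setIntegral_Ioi_cosh_half_mul_comp_sinh_half fun w => ∫ a in Ioo 0 w,
        w * exp (-(2 * x) * w ^ 2) * (1 + w ^ 2 - a ^ 2)⁻¹, ← integral_const_mul]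
      refine setIntegral_congr_fun measurableSet_Ioi fun t (ht : 0 < t) => ?_
      have hsinh : 0 ≤ sinh (t / 2) := sinh_nonneg_iff.2 (by positivity)
      have hexp : exp (-(x * cosh t)) = exp (-x) * exp (-(2 * x) * sinh (t / 2) ^ 2) := by
        rw [cosh_eq_one_add_two_mul_sinh_half_sq t, ← exp_add]
        ring_nf
      rw [integral_const_mul, ← integral_Ioc_eq_integral_Ioo,
        ← intervalIntegral.integral_of_le hsinh, integral_inv_one_add_sinh_sq_sub_sq, hexp]
      field_simp [(cosh_pos (t / 2)).ne']
      norm_num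
    _ = 4 * exp (-x) * ∫ a in Ioi 0, ∫ w in Ioi a,
          w * exp (-(2 * x) * w ^ 2) * (1 + w ^ 2 - a ^ 2)⁻¹ := by
      rw [setIntegral_Ioi_setIntegral_Ioi_swap (integrableOn_mul_exp_neg_mul_sq_div hx2)]
    _ = 4 * exp (-x) * ∫ a in Ioi 0, exp (-(2 * x) * a ^ 2) * (1 / 2 * E) := by
      rw [setIntegral_congr_fun measurableSet_Ioi fun a (ha : 0 < a) =>
        setIntegral_Ioi_mul_exp_neg_mul_sq_div ha.le hx2]
    _ = √(π / (2 * x)) * exp (-x) * E := by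
      rw [integral_mul_const, integral_gaussian_Ioi]
      ring

theorem hasDerivAt_besselK_one_half (hx : 0 < x) :
    HasDerivAt (fun s => besselK s x)
      (√(π / (2 * x)) * exp (-x) * ∫ u in Ioi 0, exp (-u) / (u + 2 * x)) (1 / 2) := by
  convert hasDerivAt_besselK (1 / 2) hx using 1
  rw [← setIntegral_Ioi_mul_sinh_half_mul_exp_neg_mul_cosh hx]
  simp only [one_div_mul_eq_div]

end

theorem stmt4 (x : ℝ) (hx : 0 < x) :
    deriv (fun s : ℝ =>
        Real.pi ^ (-(1:ℝ)/2) * (2 / x) ^ s * Real.Gamma (s + 1/2) *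
          ∫ u in Set.Ioi (0:ℝ), Real.cos (x * u) / (u ^ 2 + 1) ^ (s + 1/2)) (1/2)
      = Real.sqrt (Real.pi / (2 * x)) * Real.exp (-x)
          * ∫ u in Set.Ioi (0:ℝ), Real.exp (-u) / (u + 2 * x) := by
  rw [← (hasDerivAt_besselK_one_half hx).deriv]
  refine EventuallyEq.deriv_eq ?_
  filter_upwards [Ioi_mem_nhds one_half_pos] with s hs
  exact (besselK_eq_setIntegral_Ioi_cos hx hs).symm
end
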